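/- arXiv:2604.25872 — 3 statements merged into one kernel-verified Lean document; each statement's English description precedes it below -/
import Mathlib

section
/- Assume the ground truth reward r_G satisfies the reward structure assumption, the initial parameters θ_0 satisfy the initial policy assumption (general-features case), the feature vectors satisfy the positive-inner-product feature assumption, and ‖φ(y_med)‖² < s < ‖φ(y_⋆)‖² < 100‖φ(y_med)‖². Let ε ∈ (0, Δ1), and suppose θ_t is the gradient flow maximizing V_G. Then there exists a time t ≤ (r_G(y_⋆) + 1)² / (ε² Δ1 ‖φ(y_⋆) − φ(y_med)‖²) · π_{θ_0}(y_⋆)^{−1} at which V_G(θ_t) ≥ r_G(y_⋆) − ε. -/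
open scoped BigOperators RealInnerProductSpace

noncomputable def policy {Y : Type*} [Fintype Y] {D : ℕ}
    (φ : Y → EuclideanSpace ℝ (Fin D)) (θ : EuclideanSpace ℝ (Fin D)) (y : Y) : ℝ :=
  Real.exp ⟪φ y, θ⟫ / ∑ z, Real.exp ⟪φ z, θ⟫

noncomputable def expReward {Y : Type*} [Fintype Y] {D : ℕ}
    (φ : Y → EuclideanSpace ℝ (Fin D)) (r : Y → ℝ) (θ : EuclideanSpace ℝ (Fin D)) : ℝ :=
  ∑ y, policy φ θ y * r y

/-!
Along the flow, `1 / π(y⋆) = ∑ z, exp ⟪φ z - φ y⋆, θ⟫` falls at a rate bounded away from `0` as long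
as the expected reward `V` stays below `r y⋆ - ε`; being positive, it cannot do so for longer than
its initial value permits.

For the rate, let `d = φ y⋆ - φ y_med` and let `A`, `C` be the weights `π(y) (r y - V)` of `y⋆` and
`y_med` in `∇V = ∑ y, π(y) (r y - V) • φ y`. All weights sum to zero and the bad ones are
nonpositive, so `0 ≤ A + C`. Bad features are orthogonal to `d`, hence
`⟪d, ∇V⟫ = A ‖d‖² + (A + C) ⟪d, φ y_med⟫ ≥ A ‖d‖²`. The logit of `y_med` does not decrease and
those of bad outputs do not increase, so the logit gap between `y⋆` and every other output grows at
rate at least `A ‖d‖²`. Therefore `1 / π(y⋆)` falls at rate at least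
`(1 - π(y⋆)) (r y⋆ - V) ‖d‖²`, where `1 - π(y⋆) ≥ (r y⋆ - V) / (r y⋆ - r y_bad)`.
-/

section Softmax

variable {Y : Type*} [Fintype Y] {D : ℕ} (φ : Y → EuclideanSpace ℝ (Fin D))
  (θ : EuclideanSpace ℝ (Fin D))

theorem policy_eq_inv_sum_exp (y : Y) :
    policy φ θ y = (∑ z, Real.exp ⟪φ z - φ y, θ⟫)⁻¹ := by
  simp_rw [policy, inner_sub_left, Real.exp_sub]
  rw [← Finset.sum_div, inv_div]

theorem policy_pos (y : Y) : 0 < policy φ θ y :=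
  div_pos (Real.exp_pos _) (Finset.sum_pos (fun _ _ => Real.exp_pos _) ⟨y, Finset.mem_univ y⟩)

theorem sum_policy [Nonempty Y] : ∑ y, policy φ θ y = 1 := by
  simp_rw [policy]
  rw [← Finset.sum_div]
  exact div_self (Finset.sum_pos (fun _ _ => Real.exp_pos _) Finset.univ_nonempty).ne'

theorem policy_mul_exp_inner_sub (y z : Y) :
    policy φ θ y * Real.exp ⟪φ z - φ y, θ⟫ = policy φ θ z := by
  rw [policy, policy, inner_sub_left, Real.exp_sub]
  field_simp

/-- The expectation of the feature vector of an output drawn from the softmax policy, so that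
`φ y - meanFeature φ θ` is the gradient in `θ` of `log (policy φ θ y)`. -/
noncomputable def meanFeature : EuclideanSpace ℝ (Fin D) :=
  ∑ z, policy φ θ z • φ z

theorem sub_meanFeature [Nonempty Y] (v : EuclideanSpace ℝ (Fin D)) :
    v - meanFeature φ θ = ∑ z, policy φ θ z • (v - φ z) := by
  simp_rw [smul_sub, Finset.sum_sub_distrib, ← Finset.sum_smul, sum_policy, one_smul, meanFeature]

theorem hasGradientAt_policy (y : Y) :
    HasGradientAt (fun θ => policy φ θ y) (policy φ θ y • (φ y - meanFeature φ θ)) θ := by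
  have : Nonempty Y := ⟨y⟩
  have hsum : HasFDerivAt (fun θ => ∑ z, Real.exp ⟪φ z - φ y, θ⟫)
      (∑ z, Real.exp ⟪φ z - φ y, θ⟫ • innerSL ℝ (φ z - φ y)) θ :=
    .fun_sum fun z _ => ((innerSL ℝ (φ z - φ y)).hasFDerivAt (x := θ)).exp
  have hinv : (∑ z, Real.exp ⟪φ z - φ y, θ⟫)⁻¹ = policy φ θ y := (policy_eq_inv_sum_exp φ θ y).symm
  have hne : ∑ z, Real.exp ⟪φ z - φ y, θ⟫ ≠ 0 :=
    (inv_pos.1 (hinv ▸ policy_pos φ θ y)).ne'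
  rw [funext fun θ => policy_eq_inv_sum_exp φ θ y]
  refine ((hasDerivAt_inv hne).comp_hasFDerivAt θ hsum).congr_fderiv ?_
  ext v
  simp only [← inv_pow, hinv, sub_meanFeature, smul_apply, sum_apply, innerSL_apply_apply,
    smul_eq_mul, InnerProductSpace.toDual_apply_apply, real_inner_smul_left, sum_inner,
    Finset.mul_sum]
  refine Finset.sum_congr rfl fun z _ => ?_
  rw [← policy_mul_exp_inner_sub φ θ y z, ← neg_sub (φ y) (φ z), inner_neg_left, inner_neg_left]
  ring

theorem hasDerivAt_inv_policy {θt : ℝ → EuclideanSpace ℝ (Fin D)} {v : EuclideanSpace ℝ (Fin D)}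
    {t : ℝ} (hθ : HasDerivAt θt v t) (y : Y) :
    HasDerivAt (fun τ => (policy φ (θt τ) y)⁻¹)
      (-(⟪φ y - meanFeature φ (θt t), v⟫ / policy φ (θt t) y)) t := by
  have hpos := policy_pos φ (θt t) y
  refine (((hasGradientAt_policy φ (θt t) y).hasFDerivAt.comp_hasDerivAt t hθ).fun_inv
    hpos.ne').congr_deriv ?_
  simp only [InnerProductSpace.toDual_apply_apply, real_inner_smul_left, Function.comp_apply]
  field_simp

theorem le_inner_sub_meanFeature {v : EuclideanSpace ℝ (Fin D)} {y : Y} {a : ℝ}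
    (h : ∀ z, z ≠ y → a ≤ ⟪φ y - φ z, v⟫) :
    (1 - policy φ θ y) * a ≤ ⟪φ y - meanFeature φ θ, v⟫ := by
  classical
  have : Nonempty Y := ⟨y⟩
  calc (1 - policy φ θ y) * a
      = ∑ z ∈ Finset.univ.erase y, policy φ θ z * a := by
        rw [← Finset.sum_mul, Finset.sum_erase_eq_sub (Finset.mem_univ y), sum_policy]
    _ ≤ ∑ z ∈ Finset.univ.erase y, policy φ θ z * ⟪φ y - φ z, v⟫ :=
        Finset.sum_le_sum fun z hz =>
          mul_le_mul_of_nonneg_left (h z (Finset.ne_of_mem_erase hz)) (policy_pos φ θ z).le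
    _ = ⟪φ y - meanFeature φ θ, v⟫ := by
        rw [Finset.sum_erase _ (by simp), sub_meanFeature, sum_inner]
        simp_rw [real_inner_smul_left]

end Softmax

section ExpectedReward

variable {Y : Type*} [Fintype Y] {D : ℕ} (φ : Y → EuclideanSpace ℝ (Fin D)) (r : Y → ℝ)
  (θ : EuclideanSpace ℝ (Fin D))

theorem sum_policy_mul_sub [Nonempty Y] (c : ℝ) :
    ∑ y, policy φ θ y * (r y - c) = expReward φ r θ - c := by
  simp_rw [mul_sub, Finset.sum_sub_distrib, ← Finset.sum_mul, sum_policy, one_mul, expReward]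

theorem policy_mul_sub_le_expReward_sub {b : ℝ} (hb : ∀ z, b ≤ r z) (y : Y) :
    policy φ θ y * (r y - b) ≤ expReward φ r θ - b := by
  have : Nonempty Y := ⟨y⟩
  rw [← sum_policy_mul_sub]
  exact Finset.single_le_sum (f := fun z => policy φ θ z * (r z - b))
    (fun z _ => mul_nonneg (policy_pos φ θ z).le (sub_nonneg.2 (hb z))) (Finset.mem_univ y)

theorem le_expReward [Nonempty Y] {b : ℝ} (hb : ∀ z, b ≤ r z) : b ≤ expReward φ r θ := by
  rw [← sub_nonneg, ← sum_policy_mul_sub]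
  exact Finset.sum_nonneg fun z _ => mul_nonneg (policy_pos φ θ z).le (sub_nonneg.2 (hb z))

/-- The coefficient of `φ y` in the policy gradient `∇V`: the probability of `y` times its advantage
`r y - V` over the current expected reward. -/
noncomputable def advantageWeight (y : Y) : ℝ :=
  policy φ θ y * (r y - expReward φ r θ)

theorem gradient_expReward :
    gradient (expReward φ r) θ = ∑ y, advantageWeight φ r θ y • φ y := by
  have hgrad : HasFDerivAt (expReward φ r) _ θ :=
    .fun_sum fun y _ => (hasGradientAt_policy φ θ y).hasFDerivAt.mul_const (r y)
  refine ext_inner_right ℝ fun v => ?_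
  rw [inner_gradient_left, hgrad.fderiv]
  simp only [sum_apply, smul_apply, smul_eq_mul, sum_inner,
    InnerProductSpace.toDual_apply_apply, real_inner_smul_left, inner_sub_left]
  calc ∑ y, r y * (policy φ θ y * (⟪φ y, v⟫ - ⟪meanFeature φ θ, v⟫))
      = ∑ y, policy φ θ y * r y * ⟪φ y, v⟫ - expReward φ r θ * ⟪meanFeature φ θ, v⟫ := by
        rw [expReward, Finset.sum_mul, ← Finset.sum_sub_distrib]
        exact Finset.sum_congr rfl fun y _ => by ring
    _ = ∑ y, advantageWeight φ r θ y * ⟪φ y, v⟫ := by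
        simp_rw [meanFeature, sum_inner, real_inner_smul_left, Finset.mul_sum,
          ← Finset.sum_sub_distrib, advantageWeight]
        exact Finset.sum_congr rfl fun y _ => by ring

theorem inner_gradient_expReward (v : EuclideanSpace ℝ (Fin D)) :
    ⟪v, gradient (expReward φ r) θ⟫ = ∑ y, advantageWeight φ r θ y * ⟪v, φ y⟫ := by
  simp_rw [gradient_expReward, inner_sum, real_inner_smul_right]

theorem advantageWeight_nonneg {y : Y} (hy : expReward φ r θ ≤ r y) :
    0 ≤ advantageWeight φ r θ y :=
  mul_nonneg (policy_pos φ θ y).le (sub_nonneg.2 hy)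

theorem advantageWeight_nonpos {y : Y} (hy : r y ≤ expReward φ r θ) :
    advantageWeight φ r θ y ≤ 0 :=
  mul_nonpos_of_nonneg_of_nonpos (policy_pos φ θ y).le (sub_nonpos.2 hy)

theorem sum_advantageWeight [Nonempty Y] : ∑ y, advantageWeight φ r θ y = 0 :=
  (sum_policy_mul_sub φ r θ _).trans (sub_self _)

end ExpectedReward

section GradientFlow

theorem exists_neg_lt_deriv_of_pos {f f' : ℝ → ℝ} (hf : ∀ t, 0 ≤ t → HasDerivAt f (f' t) t)
    (hpos : ∀ t, 0 ≤ t → 0 < f t) {κ : ℝ} (hκ : 0 < κ) :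
    ∃ t, 0 ≤ t ∧ t ≤ f 0 / κ ∧ -κ < f' t := by
  have hT : 0 < f 0 / κ := div_pos (hpos 0 le_rfl) hκ
  obtain ⟨t, ⟨ht, htT⟩, hslope⟩ := exists_hasDerivAt_eq_slope f f' hT
    (fun t ht => (hf t ht.1).continuousAt.continuousWithinAt) (fun t ht => hf t ht.1.le)
  refine ⟨t, ht.le, htT.le, ?_⟩
  rw [hslope, lt_div_iff₀ (by simpa using hT), sub_zero, neg_mul, mul_div_cancel₀ _ hκ.ne']
  linarith [hpos _ hT.le]

variable {Y : Type*} [Fintype Y] {D : ℕ} {φ : Y → EuclideanSpace ℝ (Fin D)} {r : Y → ℝ}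

theorem exists_le_expReward_of_logit_gap_growth {y : Y} {b N ε : ℝ} (hb : ∀ z, b ≤ r z)
    (hby : b < r y) (hN : 0 < N) (hε : 0 < ε)
    (hgap : ∀ θ, expReward φ r θ ≤ r y → ∀ z, z ≠ y →
      advantageWeight φ r θ y * N ≤ ⟪φ y - φ z, gradient (expReward φ r) θ⟫)
    {θt : ℝ → EuclideanSpace ℝ (Fin D)}
    (hflow : ∀ t, 0 ≤ t → HasDerivAt θt (gradient (expReward φ r) (θt t)) t) :
    ∃ t, 0 ≤ t ∧ t ≤ (r y - b) / (ε ^ 2 * N) * (policy φ (θt 0) y)⁻¹ ∧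
      r y - ε ≤ expReward φ r (θt t) := by
  have hrange : 0 < r y - b := sub_pos.2 hby
  obtain ⟨t, ht, htT, hslow⟩ := exists_neg_lt_deriv_of_pos
    (fun t ht => hasDerivAt_inv_policy φ (hflow t ht) y)
    (fun t _ => inv_pos.2 (policy_pos φ (θt t) y))
    (show 0 < ε ^ 2 * N / (r y - b) by positivity)
  refine ⟨t, ht, htT.trans_eq (by field_simp), ?_⟩
  by_contra! hlow
  set p := policy φ (θt t) y
  set V := expReward φ r (θt t)
  have hp : 0 < p := policy_pos φ (θt t) y
  have hεV : ε ≤ r y - V := by linarith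
  have hV : 0 ≤ r y - V := hε.le.trans hεV
  have hrate : (1 - p) * (r y - V) * N ≤
      ⟪φ y - meanFeature φ (θt t), gradient (expReward φ r) (θt t)⟫ / p := by
    rw [le_div_iff₀ hp]
    calc (1 - p) * (r y - V) * N * p = (1 - p) * (advantageWeight φ r (θt t) y * N) := by
          rw [advantageWeight]; ring
      _ ≤ _ := le_inner_sub_meanFeature φ (θt t) (hgap (θt t) (by linarith))
  have hmass : r y - V ≤ (1 - p) * (r y - b) := by
    linarith [policy_mul_sub_le_expReward_sub φ r (θt t) hb y]
  have hfast : ε ^ 2 * N / (r y - b) ≤ (1 - p) * (r y - V) * N := by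
    rw [div_le_iff₀ hrange]
    calc ε ^ 2 * N ≤ (r y - V) * (r y - V) * N := by rw [sq]; gcongr
      _ ≤ (1 - p) * (r y - b) * (r y - V) * N := by gcongr
      _ = (1 - p) * (r y - V) * N * (r y - b) := by ring
  linarith

end GradientFlow

section OrthogonalBadOutputs

variable {Y : Type*} [Fintype Y] {D : ℕ} {φ : Y → EuclideanSpace ℝ (Fin D)} {r : Y → ℝ}
  {θ : EuclideanSpace ℝ (Fin D)} {ystar ymed : Y}

theorem advantageWeight_add_nonneg (hne : ystar ≠ ymed)
    (hbad : ∀ y, y ≠ ystar → y ≠ ymed → r y ≤ expReward φ r θ) :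
    0 ≤ advantageWeight φ r θ ystar + advantageWeight φ r θ ymed := by
  classical
  have : Nonempty Y := ⟨ystar⟩
  have hrest : ∑ y ∈ Finset.univ \ {ystar, ymed}, advantageWeight φ r θ y ≤ 0 :=
    Finset.sum_nonpos fun y hy => by
      simp only [Finset.mem_sdiff, Finset.mem_univ, true_and, Finset.mem_insert,
        Finset.mem_singleton, not_or] at hy
      exact advantageWeight_nonpos φ r θ (hbad y hy.1 hy.2)
  have hsplit := Finset.sum_sdiff (f := advantageWeight φ r θ)
    (Finset.subset_univ {ystar, ymed})
  rw [sum_advantageWeight, Finset.sum_pair hne] at hsplit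
  linarith

theorem inner_gradient_expReward_eq_add (hne : ystar ≠ ymed) {v : EuclideanSpace ℝ (Fin D)}
    (horth : ∀ y, y ≠ ystar → y ≠ ymed → ⟪v, φ y⟫ = 0) :
    ⟪v, gradient (expReward φ r) θ⟫
      = advantageWeight φ r θ ystar * ⟪v, φ ystar⟫ + advantageWeight φ r θ ymed * ⟪v, φ ymed⟫ := by
  rw [inner_gradient_expReward, Fintype.sum_eq_add ystar ymed hne]
  rintro y ⟨hstar, hmed⟩
  rw [horth y hstar hmed, mul_zero]

theorem inner_gradient_expReward_nonpos_of_orthogonal {z : Y} (horth : ∀ y, y ≠ z → ⟪φ z, φ y⟫ = 0)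
    (hz : r z ≤ expReward φ r θ) :
    ⟪φ z, gradient (expReward φ r) θ⟫ ≤ 0 := by
  rw [inner_gradient_expReward, Fintype.sum_eq_single z fun y hy => by rw [horth y hy, mul_zero]]
  exact mul_nonpos_of_nonpos_of_nonneg (advantageWeight_nonpos φ r θ hz) real_inner_self_nonneg

theorem inner_ymed_gradient_expReward_nonneg (hne : ystar ≠ ymed)
    (hbad : ∀ y, y ≠ ystar → y ≠ ymed → r y ≤ expReward φ r θ)
    (hstar : expReward φ r θ ≤ r ystar)
    (horth : ∀ y, y ≠ ystar → y ≠ ymed → ⟪φ ymed, φ y⟫ = 0)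
    (hinner : ‖φ ymed‖ ^ 2 ≤ ⟪φ ystar, φ ymed⟫) :
    0 ≤ ⟪φ ymed, gradient (expReward φ r) θ⟫ := by
  have hweights := advantageWeight_add_nonneg hne hbad
  have hweight := advantageWeight_nonneg φ r θ hstar
  rw [inner_gradient_expReward_eq_add hne horth, real_inner_self_eq_norm_sq, real_inner_comm]
  linarith [mul_nonneg hweight (sub_nonneg.2 hinner), mul_nonneg hweights (sq_nonneg ‖φ ymed‖)]

theorem advantageWeight_mul_le_inner_sub_gradient (hne : ystar ≠ ymed)
    (hbad : ∀ y, y ≠ ystar → y ≠ ymed → r y ≤ expReward φ r θ)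
    (horth : ∀ y, y ≠ ystar → y ≠ ymed → ⟪φ ystar - φ ymed, φ y⟫ = 0)
    (hinner : ‖φ ymed‖ ^ 2 ≤ ⟪φ ystar, φ ymed⟫) :
    advantageWeight φ r θ ystar * ‖φ ystar - φ ymed‖ ^ 2
      ≤ ⟪φ ystar - φ ymed, gradient (expReward φ r) θ⟫ := by
  have hweights := advantageWeight_add_nonneg hne hbad
  have hmed : 0 ≤ ⟪φ ystar - φ ymed, φ ymed⟫ := by
    rw [inner_sub_left, real_inner_self_eq_norm_sq]
    exact sub_nonneg.2 hinner
  have hstar : ⟪φ ystar - φ ymed, φ ystar⟫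
      = ‖φ ystar - φ ymed‖ ^ 2 + ⟪φ ystar - φ ymed, φ ymed⟫ := by
    rw [← real_inner_self_eq_norm_sq, ← inner_add_right, sub_add_cancel]
  rw [inner_gradient_expReward_eq_add hne horth, hstar]
  linarith [mul_nonneg hweights hmed]

theorem advantageWeight_mul_le_inner_sub_gradient_of_ne (hne : ystar ≠ ymed)
    (hbad : ∀ y, y ≠ ystar → y ≠ ymed → r y ≤ expReward φ r θ)
    (hstar : expReward φ r θ ≤ r ystar)
    (horth : ∀ z, z ≠ ystar → z ≠ ymed → ∀ y, y ≠ z → ⟪φ z, φ y⟫ = 0)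
    (hinner : ‖φ ymed‖ ^ 2 ≤ ⟪φ ystar, φ ymed⟫) {z : Y} (hz : z ≠ ystar) :
    advantageWeight φ r θ ystar * ‖φ ystar - φ ymed‖ ^ 2
      ≤ ⟪φ ystar - φ z, gradient (expReward φ r) θ⟫ := by
  have horth_star (y : Y) (hs : y ≠ ystar) (hm : y ≠ ymed) : ⟪φ ystar, φ y⟫ = 0 := by
    rw [real_inner_comm, horth y hs hm ystar hs.symm]
  have horth_med (y : Y) (hs : y ≠ ystar) (hm : y ≠ ymed) : ⟪φ ymed, φ y⟫ = 0 := by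
    rw [real_inner_comm, horth y hs hm ymed hm.symm]
  have hgap_med := advantageWeight_mul_le_inner_sub_gradient hne hbad
    (fun y hs hm => by rw [inner_sub_left, horth_star y hs hm, horth_med y hs hm, sub_self]) hinner
  rcases eq_or_ne z ymed with rfl | hzmed
  · exact hgap_med
  · have hmed_nonneg := inner_ymed_gradient_expReward_nonneg hne hbad hstar horth_med hinner
    have hz_nonpos :=
      inner_gradient_expReward_nonpos_of_orthogonal (horth z hz hzmed) (hbad z hz hzmed)
    rw [inner_sub_left] at hgap_med ⊢
    linarith

end OrthogonalBadOutputs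

theorem div_mul_le_sq_div_mul_mul {a b c x y : ℝ} (hac : a ≤ c) (hb : 0 < b) (hbc : b ≤ c)
    (hx : 0 ≤ x) (hy : 0 ≤ y) : a / (x * y) ≤ c ^ 2 / (x * b * y) :=
  calc a / (x * y) ≤ c ^ 2 / b / (x * y) := by
        gcongr
        rw [le_div_iff₀ hb, sq]
        exact mul_le_mul hac hbc hb.le (hb.le.trans hbc)
    _ = c ^ 2 / (x * b * y) := by rw [div_div, mul_left_comm, mul_assoc]

theorem fast_opt_pos_inner_general {Y : Type*} [Fintype Y] {D : ℕ}
    {φ : Y → EuclideanSpace ℝ (Fin D)} {r : Y → ℝ} {ystar ymed : Y} {b : ℝ}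
    (hbad : ∀ y, y ≠ ystar → y ≠ ymed → r y = b) (hstar : b < r ystar) (hmed : b ≤ r ymed)
    (horth : ∀ z, z ≠ ystar → z ≠ ymed → ∀ y, y ≠ z → ⟪φ z, φ y⟫ = 0)
    (hφ : φ ystar ≠ φ ymed) (hinner : ‖φ ymed‖ ^ 2 ≤ ⟪φ ystar, φ ymed⟫)
    {θt : ℝ → EuclideanSpace ℝ (Fin D)}
    (hflow : ∀ t, 0 ≤ t → HasDerivAt θt (gradient (expReward φ r) (θt t)) t)
    {ε : ℝ} (hε : 0 < ε) :
    ∃ t, 0 ≤ t ∧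
      t ≤ (r ystar - b) / (ε ^ 2 * ‖φ ystar - φ ymed‖ ^ 2) * (policy φ (θt 0) ystar)⁻¹ ∧
      r ystar - ε ≤ expReward φ r (θt t) := by
  have : Nonempty Y := ⟨ystar⟩
  have hb (y : Y) : b ≤ r y := by
    rcases eq_or_ne y ystar with rfl | hs
    · exact hstar.le
    rcases eq_or_ne y ymed with rfl | hm
    · exact hmed
    · exact (hbad y hs hm).ge
  have hd : 0 < ‖φ ystar - φ ymed‖ ^ 2 := pow_pos (norm_sub_pos_iff.2 hφ) 2
  have hbad_le (θ) (y : Y) (hs : y ≠ ystar) (hm : y ≠ ymed) : r y ≤ expReward φ r θ :=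
    hbad y hs hm ▸ le_expReward φ r θ hb
  exact exists_le_expReward_of_logit_gap_growth hb hstar hd hε
    (fun θ hV _ hz => advantageWeight_mul_le_inner_sub_gradient_of_ne (ne_of_apply_ne φ hφ)
      (hbad_le θ) hV horth hinner hz) hflow

theorem fast_opt_pos_inner {Y : Type*} [Fintype Y] {D : ℕ}
    (φ : Y → EuclideanSpace ℝ (Fin D)) (hφ : ∀ y, φ y ≠ 0)
    (rG : Y → ℝ) (hrG : ∀ y, rG y ∈ Set.Icc (-1 : ℝ) 1)
    (ystar ymed ybad : Y) (Ybad : Finset Y) (hybad : ybad ∈ Ybad)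
    (hsm : ystar ≠ ymed) (hsb : ystar ∉ Ybad) (hmb : ymed ∉ Ybad)
    (hcover : ∀ y : Y, y = ystar ∨ y = ymed ∨ y ∈ Ybad)
    (hr1 : rG ymed < rG ystar) (hr2 : 0 < rG ymed)
    (hr3 : ∀ y ∈ Ybad, rG y ≤ 0)
    (hr4 : ∀ y ∈ Ybad, rG y = rG ybad)
    (Δ1 Δ2 : ℝ) (hΔ1 : Δ1 = rG ystar - rG ymed) (hΔ2 : Δ2 = rG ymed - rG ybad)
    (s : ℝ) (hs : s = ⟪φ ystar, φ ymed⟫) (hspos : 0 < s)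
    (horthbad : ∀ yb ∈ Ybad, ∀ y : Y, y ≠ yb → ⟪φ yb, φ y⟫ = 0)
    (θt : ℝ → EuclideanSpace ℝ (Fin D))
    (hflow : ∀ t : ℝ, 0 ≤ t → HasDerivAt θt (gradient (expReward φ rG) (θt t)) t)
    (B M' : ℝ)
    (hB : B = Finset.univ.sup' ⟨ystar, Finset.mem_univ ystar⟩ fun y => ‖φ y‖)
    (hM' : M' = min 1 (‖φ ymed‖ ^ 2 * rG ymed ^ ((2:ℝ)/7) / (40 * B ^ 2 * (Δ1 + Δ2))))
    (hinit1 : policy φ (θt 0) ystar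
        < min (M' * (min 0.01 ((21 * ‖φ ymed‖ ^ 2 / (1100 * B ^ 2 * (Δ1 + Δ2))) ^ ((7:ℝ)/3))) ^ ((13:ℝ)/14))
            (‖φ ymed‖ / ‖φ ystar‖ * policy φ (θt 0) ymed))
    (hinit2 : max (2 * policy φ (θt 0) ystar ^ ((7:ℝ)/13) / (Δ2 * M' ^ ((7:ℝ)/13)))
        (0.05 * rG ymed) ≤ ∑ y ∈ Ybad, policy φ (θt 0) y)
    (hinit3 : ∑ y ∈ Ybad, policy φ (θt 0) y ≤ 0.1 * rG ymed)
    (hchain1 : ‖φ ymed‖ ^ 2 < s) (hchain2 : s < ‖φ ystar‖ ^ 2)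
    (hchain3 : ‖φ ystar‖ ^ 2 < 100 * ‖φ ymed‖ ^ 2)
    (ε : ℝ) (hε : ε ∈ Set.Ioo 0 Δ1) :
    ∃ t : ℝ, 0 ≤ t ∧
      t ≤ (rG ystar + 1) ^ 2 / (ε ^ 2 * Δ1 * ‖φ ystar - φ ymed‖ ^ 2)
          * (policy φ (θt 0) ystar)⁻¹ ∧
      rG ystar - ε ≤ expReward φ rG (θt t) := by
  have hbad (y : Y) (hs : y ≠ ystar) (hm : y ≠ ymed) : y ∈ Ybad :=
    ((hcover y).resolve_left hs).resolve_left hm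
  have hneg : rG ybad ≤ 0 := hr3 ybad hybad
  have hφne : φ ystar ≠ φ ymed := fun h => by
    rw [h, real_inner_self_eq_norm_sq] at hs
    exact hchain1.ne' hs
  obtain ⟨t, ht, htT, hV⟩ := fast_opt_pos_inner_general (fun y hs hm => hr4 y (hbad y hs hm))
    (by linarith) (hneg.trans hr2.le) (fun y hs hm => horthbad y (hbad y hs hm)) hφne
    (hs ▸ hchain1.le) hflow hε.1
  have hb := (hrG ybad).1
  exact ⟨t, ht, htT.trans (mul_le_mul_of_nonneg_right
    (div_mul_le_sq_div_mul_mul (by linarith) (by linarith) (by linarith) (sq_nonneg ε)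
      (sq_nonneg _)) (inv_nonneg.2 (policy_pos φ (θt 0) ystar).le)), hV⟩
end

section
/- Let r : Y → [-1, 1] be a reward function, B = max_{y∈Y} ‖φ(y)‖, and Z ⊆ Y. If θ_t evolves by gradient flow maximizing the expected reward V from initial parameters θ_0, then for all t ≥ 0, π_{θ_t}(Z) ≤ π_{θ_0}(Z) · exp(4 B² t). -/
open scoped BigOperators RealInnerProductSpace

/-!
Writing `𝔼` for the mean under the policy `π`, each probability satisfies
`∇π(y) = π(y) • (φ y - 𝔼 φ)`, so along any curve of speed at most `G` it grows at exponential rate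
at most `2 * B * G`. Gradient flow has speed at most `2 * B`, because `∇V = 𝔼 [r • (φ - 𝔼 φ)]`.
-/

section Gronwall

open Set

lemma le_mul_exp_of_deriv_le_mul {f f' : ℝ → ℝ} {K a b : ℝ} (hab : a ≤ b)
    (hf : ∀ s ∈ Icc a b, HasDerivWithinAt f (f' s) (Icc a b) s)
    (hf' : ∀ s ∈ Ico a b, f' s ≤ K * f s) :
    f b ≤ f a * Real.exp (K * (b - a)) := by
  have right_deriv : ∀ s ∈ Ico a b, HasDerivWithinAt f (f' s) (Ici s) s := fun s hs ↦
    (hf s (Ico_subset_Icc_self hs)).mono_of_mem_nhdsWithin (Icc_mem_nhdsGE_of_mem hs)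
  have bound := le_gronwallBound_of_liminf_deriv_right_le (δ := f a) (K := K) (ε := 0)
    (fun s hs ↦ (hf s hs).continuousWithinAt)
    (fun s hs _ hr ↦ (right_deriv s hs).liminf_right_slope_le hr) le_rfl
    (fun s hs ↦ by simpa only [add_zero] using hf' s hs)
    b (right_mem_Icc.2 hab)
  rwa [gronwallBound_ε0] at bound

end Gronwall

section Softmax

open Set

variable {Y E : Type*} [Fintype Y] [NormedAddCommGroup E] [InnerProductSpace ℝ E]

/-- The linear softmax policy with features in an arbitrary real inner product space; `policy` is
the case `E = EuclideanSpace ℝ (Fin D)`. -/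
noncomputable def softmaxPolicy (φ : Y → E) (θ : E) (y : Y) : ℝ :=
  Real.exp ⟪φ y, θ⟫ / ∑ z, Real.exp ⟪φ z, θ⟫

/-- The mean of a vector-valued function `v` of the output under the softmax policy. It serves both
for the mean feature vector (`v = φ`) and for the expected reward (`v = r`). -/
noncomputable def softmaxMean {F : Type*} [AddCommMonoid F] [Module ℝ F]
    (φ : Y → E) (θ : E) (v : Y → F) : F :=
  ∑ y, softmaxPolicy φ θ y • v y

lemma softmaxPolicy_nonneg (φ : Y → E) (θ : E) (y : Y) : 0 ≤ softmaxPolicy φ θ y :=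
  div_nonneg (Real.exp_nonneg _) (Finset.sum_nonneg fun _ _ ↦ Real.exp_nonneg _)

variable [Nonempty Y]

lemma sum_exp_inner_pos (φ : Y → E) (θ : E) : 0 < ∑ z, Real.exp ⟪φ z, θ⟫ :=
  Finset.sum_pos (fun _ _ ↦ Real.exp_pos _) Finset.univ_nonempty

lemma sum_softmaxPolicy (φ : Y → E) (θ : E) : ∑ y, softmaxPolicy φ θ y = 1 := by
  simp only [softmaxPolicy, ← Finset.sum_div, div_self (sum_exp_inner_pos φ θ).ne']

lemma softmaxPolicy_eq_exp_sub_log (φ : Y → E) (θ : E) (y : Y) :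
    softmaxPolicy φ θ y = Real.exp (⟪φ y, θ⟫ - Real.log (∑ z, Real.exp ⟪φ z, θ⟫)) := by
  rw [Real.exp_sub, Real.exp_log (sum_exp_inner_pos φ θ), softmaxPolicy]

section Mean

variable {F : Type*} [SeminormedAddCommGroup F] [NormedSpace ℝ F] {v : Y → F} {C : ℝ}

lemma norm_softmaxMean_le (φ : Y → E) (θ : E) (hv : ∀ y, ‖v y‖ ≤ C) :
    ‖softmaxMean φ θ v‖ ≤ C :=
  mem_closedBall_zero_iff.1 <| (convex_closedBall 0 C).sum_mem
    (fun y _ ↦ softmaxPolicy_nonneg φ θ y) (sum_softmaxPolicy φ θ)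
    (fun y _ ↦ mem_closedBall_zero_iff.2 (hv y))

lemma norm_sub_softmaxMean_le (φ : Y → E) (θ : E) (hv : ∀ y, ‖v y‖ ≤ C) (y : Y) :
    ‖v y - softmaxMean φ θ v‖ ≤ 2 * C :=
  calc ‖v y - softmaxMean φ θ v‖ ≤ ‖v y‖ + ‖softmaxMean φ θ v‖ := norm_sub_le _ _
    _ ≤ C + C := add_le_add (hv y) (norm_softmaxMean_le φ θ hv)
    _ = 2 * C := (two_mul C).symm

end Mean

lemma hasFDerivAt_log_sum_exp_inner (φ : Y → E) (θ : E) :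
    HasFDerivAt (fun θ ↦ Real.log (∑ z, Real.exp ⟪φ z, θ⟫))
      (innerSL ℝ (softmaxMean φ θ φ)) θ := by
  have hasFDerivAt_sum : HasFDerivAt (fun θ ↦ ∑ z, Real.exp ⟪φ z, θ⟫)
      (∑ z, Real.exp ⟪φ z, θ⟫ • innerSL ℝ (φ z)) θ :=
    HasFDerivAt.fun_sum fun z _ ↦ (innerSL ℝ (φ z)).hasFDerivAt.exp
  refine (hasFDerivAt_sum.log (sum_exp_inner_pos φ θ).ne').congr_fderiv ?_
  simp only [softmaxMean, softmaxPolicy, map_sum, map_smul, Finset.smul_sum, smul_smul,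
    div_eq_inv_mul]

lemma hasFDerivAt_softmaxPolicy (φ : Y → E) (θ : E) (y : Y) :
    HasFDerivAt (fun θ ↦ softmaxPolicy φ θ y)
      (softmaxPolicy φ θ y • innerSL ℝ (φ y - softmaxMean φ θ φ)) θ := by
  simp only [softmaxPolicy_eq_exp_sub_log φ _ y, map_sub]
  exact ((innerSL ℝ (φ y)).hasFDerivAt.sub (hasFDerivAt_log_sum_exp_inner φ θ)).exp

theorem sum_softmaxPolicy_le_mul_exp {φ : Y → E} {B G : ℝ} (hφ : ∀ y, ‖φ y‖ ≤ B)
    {γ γ' : ℝ → E} {a b : ℝ} (hab : a ≤ b)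
    (hγ : ∀ s ∈ Icc a b, HasDerivWithinAt γ (γ' s) (Icc a b) s)
    (hγ' : ∀ s ∈ Ico a b, ‖γ' s‖ ≤ G) (Z : Finset Y) :
    ∑ y ∈ Z, softmaxPolicy φ (γ b) y
      ≤ (∑ y ∈ Z, softmaxPolicy φ (γ a) y) * Real.exp (2 * B * G * (b - a)) := by
  refine le_mul_exp_of_deriv_le_mul hab
    (fun s hs ↦ HasDerivWithinAt.fun_sum fun y _ ↦
      (hasFDerivAt_softmaxPolicy φ (γ s) y).comp_hasDerivWithinAt s (hγ s hs)) fun s hs ↦ ?_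
  rw [Finset.mul_sum]
  refine Finset.sum_le_sum fun y _ ↦ ?_
  have centered_le := norm_sub_softmaxMean_le φ (γ s) hφ y
  have inner_le : ⟪φ y - softmaxMean φ (γ s) φ, γ' s⟫ ≤ 2 * B * G :=
    calc ⟪φ y - softmaxMean φ (γ s) φ, γ' s⟫
        ≤ ‖φ y - softmaxMean φ (γ s) φ‖ * ‖γ' s‖ := real_inner_le_norm _ _
      _ ≤ 2 * B * G := mul_le_mul centered_le (hγ' s hs) (norm_nonneg _)
          ((norm_nonneg _).trans centered_le)
  exact (mul_le_mul_of_nonneg_left inner_le (softmaxPolicy_nonneg φ (γ s) y)).trans_eq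
    (mul_comm _ _)

variable [CompleteSpace E]

lemma hasGradientAt_softmaxMean (φ : Y → E) (r : Y → ℝ) (θ : E) :
    HasGradientAt (fun θ ↦ softmaxMean φ θ r)
      (softmaxMean φ θ fun y ↦ r y • (φ y - softmaxMean φ θ φ)) θ := by
  rw [hasGradientAt_iff_hasFDerivAt]
  refine (HasFDerivAt.fun_sum fun y _ ↦
    (hasFDerivAt_softmaxPolicy φ θ y).mul_const (r y)).congr_fderiv ?_
  ext w
  simp only [softmaxMean, InnerProductSpace.toDual_apply_apply, sum_inner, real_inner_smul_left,
    sum_apply, smul_apply, innerSL_apply_apply, smul_eq_mul, mul_left_comm]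

lemma norm_gradient_softmaxMean_le {φ : Y → E} {r : Y → ℝ} {B R : ℝ} (hφ : ∀ y, ‖φ y‖ ≤ B)
    (hr : ∀ y, |r y| ≤ R) (θ : E) :
    ‖gradient (fun θ ↦ softmaxMean φ θ r) θ‖ ≤ 2 * R * B := by
  rw [(hasGradientAt_softmaxMean φ r θ).gradient]
  refine norm_softmaxMean_le φ θ fun y ↦ ?_
  calc ‖r y • (φ y - softmaxMean φ θ φ)‖
      = |r y| * ‖φ y - softmaxMean φ θ φ‖ := norm_smul _ _
    _ ≤ R * (2 * B) := mul_le_mul (hr y) (norm_sub_softmaxMean_le φ θ hφ y) (norm_nonneg _)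
        ((abs_nonneg _).trans (hr y))
    _ = 2 * R * B := by ring

theorem prob_growth_bound_general {φ : Y → E} {r : Y → ℝ} {B R : ℝ} (hφ : ∀ y, ‖φ y‖ ≤ B)
    (hr : ∀ y, |r y| ≤ R) (Z : Finset Y) {θt : ℝ → E} {t : ℝ} (ht : 0 ≤ t)
    (hflow : ∀ s ∈ Icc 0 t,
      HasDerivWithinAt θt (gradient (fun θ ↦ softmaxMean φ θ r) (θt s)) (Icc 0 t) s) :
    ∑ y ∈ Z, softmaxPolicy φ (θt t) y
      ≤ (∑ y ∈ Z, softmaxPolicy φ (θt 0) y) * Real.exp (4 * R * B ^ 2 * t) := by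
  have growth := sum_softmaxPolicy_le_mul_exp hφ ht hflow
    (fun s _ ↦ norm_gradient_softmaxMean_le hφ hr (θt s)) Z
  convert growth using 3
  ring

end Softmax

section Euclidean

variable {Y : Type*} [Fintype Y] {D : ℕ}

lemma policy_eq_softmaxPolicy (φ : Y → EuclideanSpace ℝ (Fin D)) :
    policy φ = softmaxPolicy φ :=
  rfl

lemma expReward_eq_softmaxMean (φ : Y → EuclideanSpace ℝ (Fin D)) (r : Y → ℝ) :
    expReward φ r = fun θ ↦ softmaxMean φ θ r :=
  rfl

end Euclidean

theorem prob_growth_bound {Y : Type*} [Fintype Y] [Nonempty Y] {D : ℕ}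
    (φ : Y → EuclideanSpace ℝ (Fin D)) (hφ : ∀ y, φ y ≠ 0)
    (r : Y → ℝ) (hr : ∀ y, r y ∈ Set.Icc (-1 : ℝ) 1)
    (Z : Finset Y)
    (B : ℝ) (hB : B = Finset.univ.sup' Finset.univ_nonempty fun y => ‖φ y‖)
    (θt : ℝ → EuclideanSpace ℝ (Fin D))
    (hflow : ∀ t : ℝ, 0 ≤ t → HasDerivAt θt (gradient (expReward φ r) (θt t)) t)
    (t : ℝ) (ht : 0 ≤ t) :
    ∑ y ∈ Z, policy φ (θt t) y
      ≤ (∑ y ∈ Z, policy φ (θt 0) y) * Real.exp (4 * B ^ 2 * t) := by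
  have norm_le : ∀ y, ‖φ y‖ ≤ B := fun y ↦ hB ▸ Finset.le_sup' (‖φ ·‖) (Finset.mem_univ y)
  rw [expReward_eq_softmaxMean] at hflow
  simpa only [policy_eq_softmaxPolicy, mul_one] using
    prob_growth_bound_general norm_le (fun y ↦ abs_le.2 (hr y)) Z ht
      fun s hs ↦ (hflow s hs.1).hasDerivWithinAt
end

section
/- Suppose the ground truth reward r_G satisfies the reward structure assumption and let B = max_{y∈Y} ‖φ(y)‖. Then for every θ ∈ ℝ^D, the gradient of the expected reward satisfies ‖∇V_G(θ)‖ ≤ 2 B (Δ1 + Δ2)(1 − π_θ(y_med)). -/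
open scoped BigOperators RealInnerProductSpace

/-! Since the probabilities sum to one, subtracting the baseline `r y₀` from the reward does not
change the gradient, which is therefore `∑ y, (r y - r y₀) π(y) (φ y - 𝔼 φ)`. The summand of `y₀`
vanishes, so only the mass `1 - π(y₀)` contributes, and `𝔼 φ` is a convex combination of the
features, hence within their diameter of each of them. -/

section Softmax

variable {Y : Type*} [Fintype Y]

/-- The softmax distribution of a vector `x` of logits; `policy φ θ` is by definition the softmax
of the linear logits `y ↦ ⟪φ y, θ⟫`. -/
noncomputable def softmax (x : Y → ℝ) (y : Y) : ℝ :=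
  Real.exp (x y) / ∑ z, Real.exp (x z)

lemma softmax_nonneg (x : Y → ℝ) (y : Y) : 0 ≤ softmax x y := by
  unfold softmax
  positivity

lemma sum_exp_pos [Nonempty Y] (x : Y → ℝ) : 0 < ∑ y, Real.exp (x y) :=
  Finset.sum_pos (fun y _ => Real.exp_pos (x y)) Finset.univ_nonempty

lemma sum_softmax [Nonempty Y] (x : Y → ℝ) : ∑ y, softmax x y = 1 := by
  simp only [softmax, ← Finset.sum_div, div_self (sum_exp_pos x).ne']

lemma softmax_eq_exp_sub_log_sum_exp [Nonempty Y] (x : Y → ℝ) (y : Y) :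
    softmax x y = Real.exp (x y - Real.log (∑ z, Real.exp (x z))) := by
  rw [Real.exp_sub, Real.exp_log (sum_exp_pos x), softmax]

section Derivative

variable [Nonempty Y] {E : Type*} [NormedAddCommGroup E] [NormedSpace ℝ E]
  {f : Y → E → ℝ} {f' : Y → E →L[ℝ] ℝ} {θ : E}

lemma hasFDerivAt_log_sum_exp (hf : ∀ y, HasFDerivAt (f y) (f' y) θ) :
    HasFDerivAt (fun t => Real.log (∑ y, Real.exp (f y t)))
      (∑ y, softmax (f · θ) y • f' y) θ := by
  have hsum : HasFDerivAt (fun t => ∑ y, Real.exp (f y t)) (∑ y, Real.exp (f y θ) • f' y) θ :=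
    HasFDerivAt.fun_sum fun y _ => (hf y).exp
  refine (hsum.log (sum_exp_pos (f · θ)).ne').congr_fderiv ?_
  simp only [softmax, Finset.smul_sum, smul_smul, div_eq_inv_mul]

lemma hasFDerivAt_softmax (hf : ∀ y, HasFDerivAt (f y) (f' y) θ) (y : Y) :
    HasFDerivAt (fun t => softmax (f · t) y)
      (softmax (f · θ) y • (f' y - ∑ z, softmax (f · θ) z • f' z)) θ := by
  simpa only [softmax_eq_exp_sub_log_sum_exp] using
    ((hf y).fun_sub (hasFDerivAt_log_sum_exp hf)).exp

lemma hasFDerivAt_sum_softmax_mul (hf : ∀ y, HasFDerivAt (f y) (f' y) θ) (r : Y → ℝ) (b : ℝ) :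
    HasFDerivAt (fun t => ∑ y, softmax (f · t) y * r y)
      (∑ y, (r y - b) • softmax (f · θ) y • (f' y - ∑ z, softmax (f · θ) z • f' z)) θ := by
  have hbaseline : (fun t => ∑ y, softmax (f · t) y * r y) =
      fun t => ∑ y, softmax (f · t) y * (r y - b) + b := by
    funext t
    simp only [mul_sub, Finset.sum_sub_distrib, ← Finset.sum_mul, sum_softmax, one_mul,
      sub_add_cancel]
  rw [hbaseline]
  exact (HasFDerivAt.fun_sum fun y _ => (hasFDerivAt_softmax hf y).mul_const (r y - b)).add_const b

end Derivative

end Softmax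

section WeightedSums

variable {Y : Type*} [Fintype Y] {E : Type*} [SeminormedAddCommGroup E] [NormedSpace ℝ E]
  {w : Y → ℝ} {v : Y → E} {K : ℝ}

lemma norm_sub_sum_smul_le (hw : ∀ y, 0 ≤ w y) (hsum : ∑ y, w y = 1) {u : E}
    (hv : ∀ y, ‖u - v y‖ ≤ K) : ‖u - ∑ y, w y • v y‖ ≤ K := by
  have hmem : ∑ y, w y • v y ∈ Metric.closedBall u K :=
    (convex_closedBall u K).sum_mem (fun y _ => hw y) hsum fun y _ =>
      mem_closedBall_iff_norm'.mpr (hv y)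
  exact mem_closedBall_iff_norm'.mp hmem

lemma norm_sum_sub_smul_le (hw : ∀ y, 0 ≤ w y) (hsum : ∑ y, w y = 1) (hv : ∀ y, ‖v y‖ ≤ K)
    {r : Y → ℝ} {y₀ : Y} {C : ℝ} (hr : ∀ y, |r y - r y₀| ≤ C) :
    ‖∑ y, (r y - r y₀) • w y • v y‖ ≤ K * C * (1 - w y₀) := by
  classical
  have hmass : ∑ y ∈ Finset.univ.erase y₀, w y = 1 - w y₀ := by
    rw [Finset.sum_erase_eq_sub (Finset.mem_univ y₀), hsum]
  have hC : 0 ≤ C := (abs_nonneg _).trans (hr y₀)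
  have hterm (y : Y) : ‖(r y - r y₀) • w y • v y‖ ≤ K * C * w y :=
    calc ‖(r y - r y₀) • w y • v y‖ = |r y - r y₀| * (w y * ‖v y‖) := by
          rw [norm_smul, norm_smul, Real.norm_eq_abs, Real.norm_of_nonneg (hw y)]
      _ ≤ C * (w y * K) := by
          gcongr
          exacts [mul_nonneg (hw y) (norm_nonneg _), hr y, hw y, hv y]
      _ = K * C * w y := by ring
  calc ‖∑ y, (r y - r y₀) • w y • v y‖
      = ‖∑ y ∈ Finset.univ.erase y₀, (r y - r y₀) • w y • v y‖ := by
        rw [Finset.sum_erase _ (by rw [sub_self, zero_smul])]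
    _ ≤ ∑ y ∈ Finset.univ.erase y₀, K * C * w y := norm_sum_le_of_le _ fun y _ => hterm y
    _ = K * C * (1 - w y₀) := by rw [← Finset.mul_sum, hmass]

end WeightedSums

theorem grad_norm_bound_general {Y : Type*} [Fintype Y]
    {E : Type*} [NormedAddCommGroup E] [NormedSpace ℝ E]
    {f : Y → E → ℝ} {f' : Y → E →L[ℝ] ℝ} {θ : E} (hf : ∀ y, HasFDerivAt (f y) (f' y) θ)
    {K : ℝ} (hK : ∀ y z, ‖f' y - f' z‖ ≤ K)
    {r : Y → ℝ} {y₀ : Y} {C : ℝ} (hr : ∀ y, |r y - r y₀| ≤ C) :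
    ‖fderiv ℝ (fun t => ∑ y, softmax (f · t) y * r y) θ‖ ≤
      K * C * (1 - softmax (f · θ) y₀) := by
  have : Nonempty Y := ⟨y₀⟩
  have hw := softmax_nonneg (f · θ)
  have hsum := sum_softmax (f · θ)
  rw [(hasFDerivAt_sum_softmax_mul hf r (r y₀)).fderiv]
  exact norm_sum_sub_smul_le hw hsum (fun y => norm_sub_sum_smul_le hw hsum (hK y)) hr

lemma norm_gradient_expReward_le {Y : Type*} [Fintype Y] {D : ℕ}
    {φ : Y → EuclideanSpace ℝ (Fin D)} {B : ℝ} (hφ : ∀ y, ‖φ y‖ ≤ B)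
    {r : Y → ℝ} {y₀ : Y} {C : ℝ} (hr : ∀ y, |r y - r y₀| ≤ C) (θ : EuclideanSpace ℝ (Fin D)) :
    ‖gradient (expReward φ r) θ‖ ≤ 2 * B * C * (1 - policy φ θ y₀) := by
  have hdiam (y z : Y) : ‖innerSL ℝ (φ y) - innerSL ℝ (φ z)‖ ≤ 2 * B := by
    rw [← map_sub, innerSL_apply_norm, two_mul]
    exact norm_sub_le_of_le (hφ y) (hφ z)
  rw [gradient, LinearIsometryEquiv.norm_map]
  exact grad_norm_bound_general (fun y => (innerSL ℝ (φ y)).hasFDerivAt) hdiam hr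

theorem grad_norm_bound {Y : Type*} [Fintype Y] {D : ℕ}
    (φ : Y → EuclideanSpace ℝ (Fin D)) (hφ : ∀ y, φ y ≠ 0)
    (rG : Y → ℝ) (hrG : ∀ y, rG y ∈ Set.Icc (-1 : ℝ) 1)
    (ystar ymed ybad : Y) (Ybad : Finset Y) (hybad : ybad ∈ Ybad)
    (hsm : ystar ≠ ymed) (hsb : ystar ∉ Ybad) (hmb : ymed ∉ Ybad)
    (hcover : ∀ y : Y, y = ystar ∨ y = ymed ∨ y ∈ Ybad)
    (hr1 : rG ymed < rG ystar) (hr2 : 0 < rG ymed)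
    (hr3 : ∀ y ∈ Ybad, rG y ≤ 0)
    (hr4 : ∀ y ∈ Ybad, rG y = rG ybad)
    (Δ1 Δ2 : ℝ) (hΔ1 : Δ1 = rG ystar - rG ymed) (hΔ2 : Δ2 = rG ymed - rG ybad)
    (B : ℝ) (hB : B = Finset.univ.sup' ⟨ystar, Finset.mem_univ ystar⟩ fun y => ‖φ y‖)
    (θ : EuclideanSpace ℝ (Fin D)) :
    ‖gradient (expReward φ rG) θ‖ ≤ 2 * B * (Δ1 + Δ2) * (1 - policy φ θ ymed) := by
  have hnorm (y : Y) : ‖φ y‖ ≤ B := hB ▸ Finset.le_sup' (fun y => ‖φ y‖) (Finset.mem_univ y)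
  have hmem (y : Y) : rG y ∈ Set.Icc (rG ybad) (rG ystar) := by
    have hbad := hr3 ybad hybad
    rcases hcover y with rfl | rfl | hy
    · constructor <;> linarith
    · constructor <;> linarith
    · constructor <;> linarith [hr4 y hy]
  have hgap (y : Y) : |rG y - rG ymed| ≤ Δ1 + Δ2 := by
    rw [hΔ1, hΔ2, sub_add_sub_cancel]
    exact Real.dist_le_of_mem_Icc (hmem y) (hmem ymed)
  exact norm_gradient_expReward_le hnorm hgap θ
end
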